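/- Let G be a connected graph with a cut vertex and let G = H₁ ∨ H₂ be a corresponding decomposition. Then for every D_j ∈ Div(H_j) (j = 1 or 2), regarded as a divisor on G via extension by zero, one has r_{H_j}(D_j) ≥ r_G(D_j). -/

import Mathlib

/-- A finite multigraph: vertices `V`, edges `E`, each edge has an (arbitrarily
ordered) pair of endpoints.  Loops are edges whose two endpoints coincide. -/
structure Multigraph where
  V : Type
  E : Type
  [decV : DecidableEq V]
  [fintV : Fintype V]
  [decE : DecidableEq E]
  [fintE : Fintype E]
  ends : E → V × V

attribute [instance] Multigraph.decV Multigraph.fintV Multigraph.decE Multigraph.fintE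

namespace Multigraph

variable (G : Multigraph)

/-- Two vertices are adjacent if some edge joins them. -/
def Adj (v w : G.V) : Prop := ∃ e : G.E, G.ends e = (v, w) ∨ G.ends e = (w, v)

/-- A multigraph is connected if it is nonempty and any two vertices are joined by a walk. -/
def Connected : Prop := Nonempty G.V ∧ ∀ v w : G.V, Relation.ReflTransGen G.Adj v w

/-- The number of edges joining `v` and `w`. -/
def numEdges (v w : G.V) : ℕ :=
  (Finset.univ.filter fun e : G.E => G.ends e = (v, w) ∨ G.ends e = (w, v)).card

/-- The number of loops based at `v`. -/
def numLoops (v : G.V) : ℕ :=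
  (Finset.univ.filter fun e : G.E => G.ends e = (v, v)).card

/-- The valency of `v` (loops count twice). -/
def valency (v : G.V) : ℕ :=
  ∑ e : G.E, ((if (G.ends e).1 = v then 1 else 0) + (if (G.ends e).2 = v then 1 else 0))

/-- The intersection product on vertices: `(v·w)` is the number of edges joining `v` and
`w` when `v ≠ w`, and `(v·v) = -val(v) + 2 loop(v)`. -/
def inter (v w : G.V) : ℤ :=
  if v = w then -(G.valency v : ℤ) + 2 * (G.numLoops v : ℤ) else (G.numEdges v w : ℤ)

/-- The principal divisor `T_v = Σ_w (v·w) w`. -/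
def T (v : G.V) : G.V → ℤ := fun w => G.inter v w

/-- The group of principal divisors, generated by the `T_v`. -/
def Prin : AddSubgroup (G.V → ℤ) := AddSubgroup.closure (Set.range G.T)

/-- The Jacobian group `Div(G)/Prin(G)`. -/
abbrev Jac := (G.V → ℤ) ⧸ G.Prin

/-- A divisor is effective if all its coefficients are nonnegative. -/
def Effective {α : Type} (D : α → ℤ) : Prop := ∀ v, 0 ≤ D v

/-- The degree of a divisor. -/
def degree {α : Type} [Fintype α] (D : α → ℤ) : ℤ := ∑ v, D v

/-- The Baker–Norine rank of a divisor: `-1` if no effective divisor is linearly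
equivalent to `D`, and otherwise the largest `k ≥ 0` such that for every effective
divisor `E` of degree `k` some effective divisor is linearly equivalent to `D - E`. -/
noncomputable def rank (D : G.V → ℤ) : ℤ :=
  sSup {r : ℤ | r = -1 ∨ (0 ≤ r ∧ ∀ E : G.V → ℤ, Effective E → degree E = r →
      ∃ F : G.V → ℤ, Effective F ∧ D - E - F ∈ G.Prin)}

/-- An edge is a loop if its two endpoints coincide. -/
def IsLoop (e : G.E) : Prop := (G.ends e).1 = (G.ends e).2

/-- The refinement of `G` obtained by inserting `n e` new vertices in the interior of
each edge `e` (subdividing `e` into `n e + 1` edges). -/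
def subdivide (n : G.E → ℕ) : Multigraph where
  V := G.V ⊕ (Σ e : G.E, Fin (n e))
  E := Σ e : G.E, Fin (n e + 1)
  ends := fun x =>
    (if h : (x.2 : ℕ) = 0 then Sum.inl (G.ends x.1).1
        else Sum.inr ⟨x.1, ⟨(x.2 : ℕ) - 1, by have := x.2.isLt; omega⟩⟩,
     if h : (x.2 : ℕ) = n x.1 then Sum.inl (G.ends x.1).2
        else Sum.inr ⟨x.1, ⟨(x.2 : ℕ), by have := x.2.isLt; omega⟩⟩)

/-- The natural map `σ* : Div(G) → Div(G̃)` to a refinement, extending a divisor by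
zero on the new vertices. -/
def subdivMap (n : G.E → ℕ) (D : G.V → ℤ) : (G.subdivide n).V → ℤ := Sum.elim D 0

/-- `Ĝ`: the loopless refinement obtained by inserting one new vertex in the interior of
every loop-edge. -/
def hat : Multigraph := G.subdivide fun e => if (G.ends e).1 = (G.ends e).2 then 1 else 0

/-- The rank `r#_G(D) := r_{Ĝ}(σ* D)`. -/
noncomputable def rankSharp (D : G.V → ℤ) : ℤ :=
  G.hat.rank (G.subdivMap (fun e => if (G.ends e).1 = (G.ends e).2 then 1 else 0) D)

/-- A multigraph is loopless if no edge is a loop. -/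
def Loopless : Prop := ∀ e : G.E, (G.ends e).1 ≠ (G.ends e).2

/-- The genus (first Betti number) `g = |E| - |V| + 1` of a connected graph. -/
def genus : ℤ := (Fintype.card G.E : ℤ) - (Fintype.card G.V : ℤ) + 1

/-- The canonical divisor `K#_G = Σ_v (val(v) - 2) v`. -/
def canonical : G.V → ℤ := fun v => (G.valency v : ℤ) - 2

/-- The loopless graph obtained from `G` by removing all loop-edges. -/
def removeLoops : Multigraph where
  V := G.V
  E := {e : G.E // (G.ends e).1 ≠ (G.ends e).2}
  ends := fun e => G.ends e.1

/-- The virtual graph `G^ω` of a weighted graph `(G, ω)`: attach `ω v` loops at each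
vertex `v`. -/
def virt (w : G.V → ℕ) : Multigraph where
  V := G.V
  E := G.E ⊕ (Σ v : G.V, Fin (w v))
  ends := Sum.elim G.ends fun p => (p.1, p.1)

/-- The rank of a divisor on the weighted graph `(G, ω)`: `r_{(G,ω)}(D) := r#_{G^ω}(D)`. -/
noncomputable def rankW (w : G.V → ℕ) (D : G.V → ℤ) : ℤ := (G.virt w).rankSharp D

/-- The canonical divisor of the weighted graph `(G, ω)`. -/
def canonicalW (w : G.V → ℕ) : G.V → ℤ := fun v => (G.valency v : ℤ) + 2 * (w v : ℤ) - 2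

/-- The genus of the weighted graph `(G, ω)`: `b₁(G) + Σ_v ω(v)`. -/
def genusW (w : G.V → ℕ) : ℤ := G.genus + ∑ v, (w v : ℤ)

/-- The rose `R_g`: one vertex and `g` loop-edges. -/
def rose (g : ℕ) : Multigraph where
  V := Unit
  E := Fin g
  ends := fun _ => ((), ())

/-- The subgraph of `G` determined by a set of vertices and a set of edges with
endpoints among them. -/
def subgraph (Vs : Finset G.V) (Es : Finset G.E)
    (h : ∀ e ∈ Es, (G.ends e).1 ∈ Vs ∧ (G.ends e).2 ∈ Vs) : Multigraph where
  V := {x : G.V // x ∈ Vs}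
  E := {e : G.E // e ∈ Es}
  ends := fun e => (⟨(G.ends e.1).1, (h e.1 e.2).1⟩, ⟨(G.ends e.1).2, (h e.1 e.2).2⟩)

/-- Extension of a divisor on a subgraph by zero: `ι_* : Div(H) → Div(G)`. -/
def iota (Vs : Finset G.V) (D : {x : G.V // x ∈ Vs} → ℤ) : G.V → ℤ :=
  fun x => if h : x ∈ Vs then D ⟨x, h⟩ else 0

end Multigraph

namespace Multigraph

/-- A decomposition `G = H₁ ∨ H₂` of `G` associated to a cut vertex `v`:  `H₁`, `H₂` are
connected subgraphs with `V(H₁) ∩ V(H₂) = {v}`, `E(H₁) ∩ E(H₂) = ∅`, covering `G`. -/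
structure Wedge (G : Multigraph) where
  v : G.V
  V1 : Finset G.V
  V2 : Finset G.V
  hv1 : v ∈ V1
  hv2 : v ∈ V2
  E1 : Finset G.E
  E2 : Finset G.E
  cover_V : V1 ∪ V2 = Finset.univ
  inter_V : V1 ∩ V2 = {v}
  cover_E : E1 ∪ E2 = Finset.univ
  disj_E : E1 ∩ E2 = ∅
  ends1 : ∀ e ∈ E1, (G.ends e).1 ∈ V1 ∧ (G.ends e).2 ∈ V1
  ends2 : ∀ e ∈ E2, (G.ends e).1 ∈ V2 ∧ (G.ends e).2 ∈ V2
  conn1 : (G.subgraph V1 E1 ends1).Connected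
  conn2 : (G.subgraph V2 E2 ends2).Connected

/-- The first subgraph `H₁` of a wedge decomposition. -/
def Wedge.H1 {G : Multigraph} (W : G.Wedge) : Multigraph := G.subgraph W.V1 W.E1 W.ends1

/-- The second subgraph `H₂` of a wedge decomposition. -/
def Wedge.H2 {G : Multigraph} (W : G.Wedge) : Multigraph := G.subgraph W.V2 W.E2 W.ends2

variable (G : Multigraph)

/-- The divisor `div(f)` of an integer-valued function `f` on the vertices
(loops contribute zero). -/
def divOf (f : G.V → ℤ) : G.V → ℤ := fun v =>
  ∑ e : G.E, ((if (G.ends e).1 = v then f v - f (G.ends e).2 else 0)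
            + (if (G.ends e).2 = v then f v - f (G.ends e).1 else 0))

/-- An isomorphism of multigraphs (edges may be matched with either orientation). -/
structure Iso (G H : Multigraph) where
  vEquiv : G.V ≃ H.V
  eEquiv : G.E ≃ H.E
  compat : ∀ e : G.E,
    H.ends (eEquiv e) = (vEquiv (G.ends e).1, vEquiv (G.ends e).2) ∨
    H.ends (eEquiv e) = (vEquiv (G.ends e).2, vEquiv (G.ends e).1)

end Multigraph

/-!
A map of vertices `ρ : G → H` pushes divisors forward, preserving effectivity and degree. If it also
preserves principal divisors and has a section `s`, then `r_G(D) ≤ r_H(ρ_* D)`: to subtract `E` from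
`ρ_* D`, subtract `s_* E` from `D` and push the resulting effective divisor forward.

Let `ρ` be a contraction of `G` onto a subgraph `H`. Since `div f = ∑ₑ (df)(e) • ∂e` and every edge
outside `H` is contracted, `ρ_* (div f) = div (f|_H)`, so `ρ_*` does preserve principal divisors. At
a cut vertex, each of the two pieces can be contracted to that vertex, leaving the other.
-/

namespace Multigraph

section Pushforward

variable {α β : Type}

/-- The pushforward `ρ_*` of divisors along a map `ρ` of vertex sets, with `ρ_* v = ρ v`. -/
noncomputable abbrev pushforward [Finite α] [Finite β] (ρ : α → β) : (α → ℤ) →ₗ[ℤ] (β → ℤ) :=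
  FunOnFinite.linearMap ℤ ℤ ρ

lemma effective_pushforward [Finite α] [Finite β] {D : α → ℤ} (hD : Effective D) (ρ : α → β) :
    Effective (pushforward ρ D) := fun w => by
  classical
  have := Fintype.ofFinite α
  rw [FunOnFinite.linearMap_apply_apply]
  exact Finset.sum_nonneg fun v _ => hD v

lemma pushforward_pushforward_of_rightInverse [Finite α] [Finite β] {ρ : α → β} {s : β → α}
    (hs : Function.RightInverse s ρ) (D : β → ℤ) : pushforward ρ (pushforward s D) = D := by
  rw [← LinearMap.comp_apply, ← FunOnFinite.linearMap_comp, hs.comp_eq_id,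
    FunOnFinite.linearMap_id, LinearMap.id_apply]

variable [Fintype α]

lemma degree_pushforward [Fintype β] (ρ : α → β) (D : α → ℤ) :
    degree (pushforward ρ D) = degree D := by
  classical
  simp only [degree, FunOnFinite.linearMap_apply_apply]
  exact Finset.sum_fiberwise _ ρ D

lemma Effective.degree_nonneg {D : α → ℤ} (hD : Effective D) : 0 ≤ degree D :=
  Finset.sum_nonneg fun v _ => hD v

lemma degree_sub (D E : α → ℤ) : degree (D - E) = degree D - degree E :=
  Finset.sum_sub_distrib D E

end Pushforward

section Principal

variable (G : Multigraph)

/-- The boundary of an edge as a divisor, for the orientation recorded by `G.ends`: the first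
endpoint minus the second. -/
def boundary (e : G.E) : G.V → ℤ := Pi.single (G.ends e).1 1 - Pi.single (G.ends e).2 1

lemma divOf_eq_sum_boundary (f : G.V → ℤ) :
    G.divOf f = ∑ e, (f (G.ends e).1 - f (G.ends e).2) • G.boundary e := by
  ext v
  simp only [divOf, boundary, Finset.sum_apply, Pi.smul_apply, Pi.sub_apply, Pi.single_apply,
    smul_eq_mul]
  refine Finset.sum_congr rfl fun e _ => ?_
  grind

lemma T_apply_eq_neg_sum_boundary_mul (v w : G.V) :
    G.T v w = -∑ e, G.boundary e v * G.boundary e w := by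
  simp only [T, inter, valency, numLoops, numEdges, Finset.card_filter, boundary, Pi.sub_apply,
    Pi.single_apply, Prod.ext_iff]
  push_cast
  split_ifs with h
  · rw [Finset.mul_sum, ← Finset.sum_neg_distrib, ← Finset.sum_add_distrib,
      ← Finset.sum_neg_distrib]
    refine Finset.sum_congr rfl fun e _ => ?_
    grind
  · rw [← Finset.sum_neg_distrib]
    refine Finset.sum_congr rfl fun e _ => ?_
    grind

lemma sum_mul_boundary (f : G.V → ℤ) (e : G.E) :
    ∑ v, f v * G.boundary e v = f (G.ends e).1 - f (G.ends e).2 := by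
  simp [boundary, mul_sub, Pi.single_apply]

lemma sum_smul_T (f : G.V → ℤ) : ∑ v, f v • G.T v = -G.divOf f := by
  ext w
  simp only [divOf_eq_sum_boundary, ← sum_mul_boundary, Finset.sum_apply, Pi.smul_apply,
    Pi.neg_apply, T_apply_eq_neg_sum_boundary_mul, smul_eq_mul, mul_neg, Finset.sum_neg_distrib,
    Finset.mul_sum, Finset.sum_mul, mul_assoc]
  rw [Finset.sum_comm]

lemma divOf_neg (f : G.V → ℤ) : G.divOf (-f) = -G.divOf f := by
  simp only [divOf_eq_sum_boundary, Pi.neg_apply, neg_sub_neg, ← Finset.sum_neg_distrib,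
    ← neg_smul, neg_sub]

variable {G}

lemma mem_Prin_iff_exists_divOf {D : G.V → ℤ} : D ∈ G.Prin ↔ ∃ f, G.divOf f = D := by
  rw [Prin, AddSubgroup.mem_closure_range_iff_of_fintype, (Equiv.neg (G.V → ℤ)).exists_congr_left]
  simp only [Equiv.neg_symm, Equiv.neg_apply, sum_smul_T, divOf_neg, neg_neg, eq_comm]

lemma degree_eq_zero_of_mem_Prin {P : G.V → ℤ} (hP : P ∈ G.Prin) : degree P = 0 := by
  obtain ⟨f, rfl⟩ := mem_Prin_iff_exists_divOf.1 hP
  simp only [degree, divOf_eq_sum_boundary, Finset.sum_apply, Pi.smul_apply]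
  rw [Finset.sum_comm]
  exact Finset.sum_eq_zero fun e _ => (G.sum_mul_boundary (fun _ => _) e).trans (sub_self _)

end Principal

section Rank

variable {G H : Multigraph}

/-- The condition defining the rank `r(D)`: every effective divisor of degree `r` can be subtracted
from `D` up to linear equivalence. For `r < 0` it holds vacuously. -/
def RankAtLeast (G : Multigraph) (D : G.V → ℤ) (r : ℤ) : Prop :=
  ∀ E : G.V → ℤ, Effective E → degree E = r → ∃ F : G.V → ℤ, Effective F ∧ D - E - F ∈ G.Prin

lemma RankAtLeast.le_degree [Nonempty G.V] {D : G.V → ℤ} {r : ℤ} (h : G.RankAtLeast D r)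
    (hr : 0 ≤ r) : r ≤ degree D := by
  obtain ⟨v⟩ := ‹Nonempty G.V›
  have hsingle : Effective (Pi.single v r : G.V → ℤ) :=
    show (0 : G.V → ℤ) ≤ Pi.single v r from Pi.single_nonneg.2 hr
  have hdegree : degree (Pi.single v r : G.V → ℤ) = r := by simp [degree]
  obtain ⟨F, hF, hprin⟩ := h (Pi.single v r) hsingle hdegree
  have hzero := degree_eq_zero_of_mem_Prin hprin
  rw [degree_sub, degree_sub, hdegree] at hzero
  linarith [hF.degree_nonneg]

lemma rankAtLeast_pushforward {ρ : G.V → H.V} (hρ : Function.Surjective ρ)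
    (hPrin : ∀ P ∈ G.Prin, pushforward ρ P ∈ H.Prin) {D : G.V → ℤ} {r : ℤ}
    (h : G.RankAtLeast D r) : H.RankAtLeast (pushforward ρ D) r := fun E hE hdegree => by
  obtain ⟨s, hs⟩ := hρ.hasRightInverse
  obtain ⟨F, hF, hprin⟩ :=
    h (pushforward s E) (effective_pushforward hE s) ((degree_pushforward s E).trans hdegree)
  refine ⟨pushforward ρ F, effective_pushforward hF ρ, ?_⟩
  simpa only [map_sub, pushforward_pushforward_of_rightInverse hs] using hPrin _ hprin

lemma rank_le_rank_pushforward [Nonempty H.V] {ρ : G.V → H.V} (hρ : Function.Surjective ρ)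
    (hPrin : ∀ P ∈ G.Prin, pushforward ρ P ∈ H.Prin) (D : G.V → ℤ) :
    G.rank D ≤ H.rank (pushforward ρ D) := by
  refine csSup_le_csSup ⟨max (-1) (degree (pushforward ρ D)), ?_⟩ ⟨-1, Or.inl rfl⟩ ?_
  · rintro r (rfl | ⟨hr, h⟩)
    · exact le_max_left _ _
    · exact le_max_of_le_right (RankAtLeast.le_degree h hr)
  · rintro r (rfl | ⟨hr, h⟩)
    · exact Or.inl rfl
    · exact Or.inr ⟨hr, rankAtLeast_pushforward hρ hPrin h⟩

end Rank

section Contraction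

variable {G : Multigraph} {Vs : Finset G.V} {Es : Finset G.E}
  {h : ∀ e ∈ Es, (G.ends e).1 ∈ Vs ∧ (G.ends e).2 ∈ Vs}

/-- A contraction of `G` onto a subgraph `H`, given on vertices: it fixes the vertices of `H` and
identifies the two endpoints of every edge outside `H`. -/
structure IsContraction (ρ : G.V → (G.subgraph Vs Es h).V) : Prop where
  leftInverse_val : Function.LeftInverse ρ Subtype.val
  map_ends_eq : ∀ e ∉ Es, ρ (G.ends e).1 = ρ (G.ends e).2

lemma iota_eq_pushforward (D : {x // x ∈ Vs} → ℤ) :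
    G.iota Vs D = pushforward Subtype.val D := by
  ext v
  rw [FunOnFinite.linearMap_apply_apply, Finset.sum_filter]
  by_cases hv : v ∈ Vs
  · rw [Finset.sum_eq_single_of_mem (⟨v, hv⟩ : {x // x ∈ Vs}) (Finset.mem_univ _)]
    · simp [iota, hv]
    · grind
  · rw [Finset.sum_eq_zero (by grind)]
    simp [iota, hv]

lemma pushforward_boundary {H : Multigraph} (ρ : G.V → H.V) (e : G.E) :
    pushforward ρ (G.boundary e) = Pi.single (ρ (G.ends e).1) 1 - Pi.single (ρ (G.ends e).2) 1 := by
  simp [boundary]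

namespace IsContraction

variable {ρ : G.V → (G.subgraph Vs Es h).V}

lemma pushforward_iota (hρ : IsContraction ρ) (D : (G.subgraph Vs Es h).V → ℤ) :
    pushforward ρ (G.iota Vs D) = D :=
  (congrArg _ (iota_eq_pushforward D)).trans
    (pushforward_pushforward_of_rightInverse hρ.leftInverse_val D)

lemma pushforward_boundary_coe (hρ : IsContraction ρ) (e : (G.subgraph Vs Es h).E) :
    pushforward ρ (G.boundary e.1) = (G.subgraph Vs Es h).boundary e := by
  have hfst : ρ (G.ends e.1).1 = ((G.subgraph Vs Es h).ends e).1 :=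
    hρ.leftInverse_val ((G.subgraph Vs Es h).ends e).1
  have hsnd : ρ (G.ends e.1).2 = ((G.subgraph Vs Es h).ends e).2 :=
    hρ.leftInverse_val ((G.subgraph Vs Es h).ends e).2
  rw [pushforward_boundary, hfst, hsnd, boundary]

lemma pushforward_boundary_of_notMem (hρ : IsContraction ρ) {e : G.E} (he : e ∉ Es) :
    pushforward ρ (G.boundary e) = 0 := by
  rw [pushforward_boundary, hρ.map_ends_eq e he, sub_self]

lemma pushforward_divOf (hρ : IsContraction ρ) (f : G.V → ℤ) :
    pushforward ρ (G.divOf f) = (G.subgraph Vs Es h).divOf fun x => f x.1 := by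
  let df (e : G.E) : ℤ := f (G.ends e).1 - f (G.ends e).2
  calc pushforward ρ (G.divOf f)
    _ = ∑ e, df e • pushforward ρ (G.boundary e) := by
      simp only [divOf_eq_sum_boundary, map_sum, map_smul, df]
    _ = ∑ e ∈ Es, df e • pushforward ρ (G.boundary e) :=
      (Finset.sum_subset (Finset.subset_univ Es) fun e _ he => by
        rw [hρ.pushforward_boundary_of_notMem he, smul_zero]).symm
    _ = ∑ e : (G.subgraph Vs Es h).E, df e.1 • (G.subgraph Vs Es h).boundary e := by
      simp only [← hρ.pushforward_boundary_coe]
      exact (Finset.sum_coe_sort Es _).symm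
    _ = (G.subgraph Vs Es h).divOf fun x => f x.1 :=
      (divOf_eq_sum_boundary (G.subgraph Vs Es h) fun x => f x.1).symm

lemma pushforward_mem_Prin (hρ : IsContraction ρ) {P : G.V → ℤ} (hP : P ∈ G.Prin) :
    pushforward ρ P ∈ (G.subgraph Vs Es h).Prin := by
  obtain ⟨f, rfl⟩ := mem_Prin_iff_exists_divOf.1 hP
  exact mem_Prin_iff_exists_divOf.2 ⟨_, (hρ.pushforward_divOf f).symm⟩

end IsContraction

end Contraction

namespace Wedge

variable {G : Multigraph} (W : G.Wedge)

/-- The same decomposition with the roles of `H₁` and `H₂` exchanged. -/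
def swap : G.Wedge where
  v := W.v
  V1 := W.V2
  V2 := W.V1
  hv1 := W.hv2
  hv2 := W.hv1
  E1 := W.E2
  E2 := W.E1
  cover_V := by rw [Finset.union_comm, W.cover_V]
  inter_V := by rw [Finset.inter_comm, W.inter_V]
  cover_E := by rw [Finset.union_comm, W.cover_E]
  disj_E := by rw [Finset.inter_comm, W.disj_E]
  ends1 := W.ends2
  ends2 := W.ends1
  conn1 := W.conn2
  conn2 := W.conn1

/-- The map `G → H₁` contracting `H₂` to the cut vertex. -/
def toH1 (x : G.V) : W.H1.V := if hx : x ∈ W.V1 then ⟨x, hx⟩ else ⟨W.v, W.hv1⟩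

lemma toH1_of_mem_V2 {x : G.V} (hx : x ∈ W.V2) : W.toH1 x = ⟨W.v, W.hv1⟩ := by
  by_cases hx1 : x ∈ W.V1
  · have hxv : x ∈ ({W.v} : Finset G.V) := W.inter_V ▸ Finset.mem_inter.2 ⟨hx1, hx⟩
    exact (dif_pos hx1).trans (Subtype.ext (Finset.mem_singleton.1 hxv))
  · exact dif_neg hx1

lemma isContraction_toH1 : IsContraction (h := W.ends1) W.toH1 where
  leftInverse_val x := dif_pos x.2
  map_ends_eq e he := by
    have he2 : e ∈ W.E2 :=
      (Finset.mem_union.1 (W.cover_E ▸ Finset.mem_univ e)).resolve_left he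
    rw [W.toH1_of_mem_V2 (W.ends2 e he2).1, W.toH1_of_mem_V2 (W.ends2 e he2).2]

end Wedge

end Multigraph

open Multigraph in
theorem wedge_rank_subgraph_ge_general {G : Multigraph} [Nonempty G.V] {Vs : Finset G.V}
    {Es : Finset G.E} {h : ∀ e ∈ Es, (G.ends e).1 ∈ Vs ∧ (G.ends e).2 ∈ Vs}
    {ρ : G.V → (G.subgraph Vs Es h).V} (hρ : IsContraction ρ) (D : (G.subgraph Vs Es h).V → ℤ) :
    G.rank (G.iota Vs D) ≤ (G.subgraph Vs Es h).rank D := by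
  have : Nonempty (G.subgraph Vs Es h).V := .map ρ ‹_›
  simpa only [hρ.pushforward_iota] using
    rank_le_rank_pushforward hρ.leftInverse_val.surjective (fun _ => hρ.pushforward_mem_Prin)
      (G.iota Vs D)

open Multigraph in
/-- For a cut-vertex decomposition `G = H₁ ∨ H₂` of a connected graph
and a divisor `D_j` on `H_j` regarded on `G` by extension by zero,
`r_{H_j}(D_j) ≥ r_G(D_j)`. -/
theorem wedge_rank_subgraph_ge (G : Multigraph) (hG : G.Connected) (W : G.Wedge)
    (D1 : W.H1.V → ℤ) (D2 : W.H2.V → ℤ) :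
    G.rank (G.iota W.V1 D1) ≤ W.H1.rank D1 ∧ G.rank (G.iota W.V2 D2) ≤ W.H2.rank D2 := by
  have : Nonempty G.V := hG.1
  exact ⟨wedge_rank_subgraph_ge_general W.isContraction_toH1 D1,
    wedge_rank_subgraph_ge_general W.swap.isContraction_toH1 D2⟩
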